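/- Let m ≥ 1 and fix j with 1 ≤ j ≤ m. In the Lie algebra of k-linear derivations of k[x₁, …, x_{2m+1}], the derivations E_r = r·x_j^{r−1} ∂/∂x_{j+m} − (r−2)·x_j^r ∂/∂x_{2m+1}, for integers r ≥ 2, pairwise commute ([E_r, E_s] = 0 for all r, s ≥ 2) and are linearly independent over k; hence their span is an infinite dimensional abelian Lie subalgebra. -/

import Mathlib

/-!
Statement 18: Let m ≥ 1 and fix j with 1 ≤ j ≤ m.  In the Lie algebra of k-linear
derivations of k[x₁, …, x_{2m+1}], the derivations
E_r = r·x_j^{r−1} ∂/∂x_{j+m} − (r−2)·x_j^r ∂/∂x_{2m+1} (for integers r ≥ 2)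
pairwise commute and are linearly independent over k; hence their span is an infinite
dimensional abelian Lie subalgebra.

Variables are indexed by `Fin (2*m+1)`, with `xᵢ` corresponding to the index `i − 1`.
-/

noncomputable section

open MvPolynomial

variable (k : Type*) [Field k]

/-- The index (in `Fin (2*m+1)`) of the variable `x_j`. -/
def idxJ (m j : ℕ) (h1 : 1 ≤ j) (hj : j ≤ m) : Fin (2 * m + 1) := ⟨j - 1, by omega⟩

/-- The index (in `Fin (2*m+1)`) of the variable `x_{j+m}`. -/
def idxJM (m j : ℕ) (h1 : 1 ≤ j) (hj : j ≤ m) : Fin (2 * m + 1) := ⟨j + m - 1, by omega⟩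

/-- The index (in `Fin (2*m+1)`) of the variable `x_{2m+1}`. -/
def idxLast (m : ℕ) : Fin (2 * m + 1) := ⟨2 * m, by omega⟩

/-- The derivation `E_r = r·x_j^{r−1} ∂/∂x_{j+m} − (r−2)·x_j^r ∂/∂x_{2m+1}`
of `k[x₁, …, x_{2m+1}]`. -/
def Econtact (m j : ℕ) (h1 : 1 ≤ j) (hj : j ≤ m) (r : ℕ) :
    Derivation k (MvPolynomial (Fin (2 * m + 1)) k) (MvPolynomial (Fin (2 * m + 1)) k) :=
  MvPolynomial.mkDerivation k fun i =>
    if i = idxJM m j h1 hj then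
      (r : MvPolynomial (Fin (2 * m + 1)) k) * X (idxJ m j h1 hj) ^ (r - 1)
    else if i = idxLast m then
      -((r : MvPolynomial (Fin (2 * m + 1)) k) - 2) * X (idxJ m j h1 hj) ^ r
    else 0

theorem idxJ_ne_idxJM (m j : ℕ) (h1 : 1 ≤ j) (hj : j ≤ m) :
    idxJ m j h1 hj ≠ idxJM m j h1 hj := by
  simp only [idxJ, idxJM, ne_eq, Fin.mk.injEq]
  omega

theorem idxJ_ne_idxLast (m j : ℕ) (h1 : 1 ≤ j) (hj : j ≤ m) :
    idxJ m j h1 hj ≠ idxLast m := by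
  simp only [idxJ, idxLast, ne_eq, Fin.mk.injEq]
  omega

/-- `E_r` annihilates `x_j`. -/
theorem Econtact_X_idxJ (m j : ℕ) (h1 : 1 ≤ j) (hj : j ≤ m) (r : ℕ) :
    Econtact k m j h1 hj r (X (idxJ m j h1 hj)) = 0 := by
  rw [Econtact, mkDerivation_X, if_neg (idxJ_ne_idxJM m j h1 hj),
    if_neg (idxJ_ne_idxLast m j h1 hj)]

theorem Econtact_X_idxJM (m j : ℕ) (h1 : 1 ≤ j) (hj : j ≤ m) (r : ℕ) :
    Econtact k m j h1 hj r (X (idxJM m j h1 hj)) =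
      monomial (Finsupp.single (idxJ m j h1 hj) (r - 1)) (r : k) := by
  rw [Econtact, mkDerivation_X, if_pos rfl, X_pow_eq_monomial, ← map_natCast (C (R := k)),
    C_mul_monomial, mul_one]

/-- The coefficients of every `E_s` are polynomials in `x_j`, so `E_r` annihilates them. -/
theorem Econtact_Econtact_X (m j : ℕ) (h1 : 1 ≤ j) (hj : j ≤ m) (r s : ℕ)
    (i : Fin (2 * m + 1)) :
    Econtact k m j h1 hj r (Econtact k m j h1 hj s (X i)) = 0 := by
  have hpow (n : ℕ) : Econtact k m j h1 hj r (X (idxJ m j h1 hj) ^ n) = 0 := by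
    rw [Derivation.leibniz_pow, Econtact_X_idxJ, smul_zero, smul_zero]
  have htwo : Econtact k m j h1 hj r 2 = 0 := by
    simpa using (Econtact k m j h1 hj r).map_natCast 2
  rw [Econtact.eq_def k m j h1 hj s, mkDerivation_X]
  split_ifs <;> simp [Derivation.leibniz, hpow, htwo]

theorem lie_Econtact_Econtact (m j : ℕ) (h1 : 1 ≤ j) (hj : j ≤ m) (r s : ℕ) :
    ⁅Econtact k m j h1 hj r, Econtact k m j h1 hj s⁆ = 0 := by
  refine MvPolynomial.derivation_ext fun i => ?_
  rw [Derivation.commutator_apply, Econtact_Econtact_X, Econtact_Econtact_X, sub_zero,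
    Derivation.zero_apply]

theorem linearIndependent_Econtact [CharZero k] (m j : ℕ) (h1 : 1 ≤ j) (hj : j ≤ m) :
    LinearIndependent k (fun r : {r : ℕ // 2 ≤ r} => Econtact k m j h1 hj r.1) := by
  classical
  rw [linearIndependent_iff']
  intro t g hg r hr
  have happ := congrArg (fun D => coeff (Finsupp.single (idxJ m j h1 hj) (r.1 - 1))
    (D (X (idxJM m j h1 hj)))) hg
  have hsum := map_sum (Derivation.coeFnAddMonoidHom (R := k)
    (A := MvPolynomial (Fin (2 * m + 1)) k) (M := MvPolynomial (Fin (2 * m + 1)) k))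
    (fun i : {r : ℕ // 2 ≤ r} => g i • Econtact k m j h1 hj i.1) t
  simp only [Derivation.coeFnAddMonoidHom, AddMonoidHom.coe_mk, ZeroHom.coe_mk] at hsum
  simp only [hsum, Finset.sum_apply, Derivation.smul_apply, Econtact_X_idxJM,
    coeff_sum, coeff_smul, coeff_monomial, Derivation.zero_apply, coeff_zero] at happ
  rw [Finset.sum_eq_single_of_mem r hr, if_pos rfl, smul_eq_mul] at happ
  · have hr0 : (r.1 : k) ≠ 0 := Nat.cast_ne_zero.2 (by have := r.2; omega)
    exact (mul_eq_zero.1 happ).resolve_right hr0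
  · intro s _ hsr
    rw [if_neg, smul_zero]
    intro h
    have hexp := Finsupp.single_injective _ h
    have := r.2
    have := s.2
    exact hsr (Subtype.ext (by omega))

/-- The bracket vanishes on the span of a set whose elements pairwise commute. -/
theorem lie_eq_zero_of_mem_span {R L : Type*} [CommRing R] [LieRing L] [LieAlgebra R L]
    {A : Set L} (hA : ∀ a ∈ A, ∀ b ∈ A, ⁅a, b⁆ = 0) {x y : L}
    (hx : x ∈ Submodule.span R A) (hy : y ∈ Submodule.span R A) : ⁅x, y⁆ = 0 := by
  induction hx, hy using Submodule.span_induction₂ with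
  | mem_mem a b ha hb => exact hA a ha b hb
  | zero_left y _ => exact zero_lie y
  | zero_right x _ => exact lie_zero x
  | add_left x y z _ _ _ hxz hyz => rw [add_lie, hxz, hyz, add_zero]
  | add_right x y z _ _ _ hxy hxz => rw [lie_add, hxy, hxz, add_zero]
  | smul_left c x y _ _ h => rw [smul_lie, h, smul_zero]
  | smul_right c x y _ _ h => rw [lie_smul, h, smul_zero]

theorem contact_abelian_family [CharZero k] (m j : ℕ) (h1 : 1 ≤ j) (hj : j ≤ m) :
    (∀ r s : ℕ, 2 ≤ r → 2 ≤ s →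
        ⁅Econtact k m j h1 hj r, Econtact k m j h1 hj s⁆ = 0) ∧
      LinearIndependent k (fun r : {r : ℕ // 2 ≤ r} => Econtact k m j h1 hj r.1) ∧
      ∃ S : LieSubalgebra k
          (Derivation k (MvPolynomial (Fin (2 * m + 1)) k) (MvPolynomial (Fin (2 * m + 1)) k)),
        (S : Set (Derivation k (MvPolynomial (Fin (2 * m + 1)) k)
            (MvPolynomial (Fin (2 * m + 1)) k))) =
            (Submodule.span k {D | ∃ r : ℕ, 2 ≤ r ∧ D = Econtact k m j h1 hj r} : Set _) ∧
          IsLieAbelian S ∧ ¬ Module.Finite k S := by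
  refine ⟨fun r s _ _ => lie_Econtact_Econtact k m j h1 hj r s,
    linearIndependent_Econtact k m j h1 hj, ?_⟩
  have hlie {x y} := lie_eq_zero_of_mem_span (R := k) (x := x) (y := y)
    (A := {D | ∃ r : ℕ, 2 ≤ r ∧ D = Econtact k m j h1 hj r}) (by
      rintro _ ⟨r, _, rfl⟩ _ ⟨s, _, rfl⟩
      exact lie_Econtact_Econtact k m j h1 hj r s)
  refine ⟨{ Submodule.span k {D | ∃ r : ℕ, 2 ≤ r ∧ D = Econtact k m j h1 hj r} with
    lie_mem' := fun {x y} hx hy => ?_ }, rfl, ⟨fun x y => Subtype.ext (hlie x.2 y.2)⟩, ?_⟩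
  · rw [hlie hx hy]
    exact Submodule.zero_mem _
  · intro hfin
    change Module.Finite k
      (Submodule.span k {D | ∃ r : ℕ, 2 ≤ r ∧ D = Econtact k m j h1 hj r}) at hfin
    have hrange : {D | ∃ r : ℕ, 2 ≤ r ∧ D = Econtact k m j h1 hj r} =
        Set.range (fun r : {r : ℕ // 2 ≤ r} => Econtact k m j h1 hj r.1) := by
      ext D
      simp [eq_comm]
    rw [hrange] at hfin
    have hfinite := (linearIndependent_span (linearIndependent_Econtact k m j h1 hj)).finite
    exact (Set.infinite_coe_iff.2 (Set.Ici_infinite 2)).not_finite hfinite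

end
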